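/- With the notation of the iterated integrals Ω at φ = π/4, the third order coefficient α₃ of the area expansion of the Lawson surfaces, given by α₃ = −(i/π³)·Ω_{2,1}³ − (1/(16π²))·Ω_{2,1}·(−8·Ω_{2,2,3} + 48·Ω_{3,1,1} + 4·Ω₃³) + (i/(2π))·(6·Ω_{2,1,1,1} + Ω_{2,1,3,3} + Ω_{2,2,2,1} − Ω_{3,1,2,3} + Ω_{3,3,2,1}), satisfies α₃ = (9/4)·ζ(3), where Ω₃ = ∫₀¹ F₃(t) dt. -/

import Mathlib

noncomputable section

/-- `p₁ = e^{iπ/4}` -/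
def p₁ : ℂ := Complex.exp (Complex.I * ((Real.pi : ℂ) / 4))
/-- `p₂ = -e^{-iπ/4}` -/
def p₂ : ℂ := -Complex.exp (-(Complex.I * ((Real.pi : ℂ) / 4)))
/-- `p₃ = -p₁` -/
def p₃ : ℂ := -p₁
/-- `p₄ = -p₂` -/
def p₄ : ℂ := -p₂

def F₁ (z : ℂ) : ℂ := 1 / (z - p₁) - 1 / (z - p₂) + 1 / (z - p₃) - 1 / (z - p₄)

def F₂ (z : ℂ) : ℂ := 1 / (z - p₁) - 1 / (z - p₂) - 1 / (z - p₃) + 1 / (z - p₄)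

def F₃ (z : ℂ) : ℂ := 1 / (z - p₁) + 1 / (z - p₂) - 1 / (z - p₃) - 1 / (z - p₄)

/-- Iterated integral along `[0, z]`:
`Omega [F_{i₁}, …, F_{iₙ}] z = Ω_{i₁,…,iₙ}(z)`, defined recursively by
`Ω_{i₁,…,i_k}(z) = ∫₀ᶻ Ω_{i₁,…,i_{k-1}}(t) · F_{i_k}(t) dt`, with `Ω_∅ ≡ 1`. -/
def Omega (fs : List (ℂ → ℂ)) : ℝ → ℂ :=
  fs.foldl (fun g f => fun z => ∫ t in (0:ℝ)..z, g t * f (t : ℂ)) (fun _ => 1)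

/-!
The amplitude `x` with `tan x = √2 z / (1 - z²)` turns `F₁ dz`, `F₂ dz`, `F₃ dz` into constant
multiples of `sin x / Δ dx`, `cos x / Δ dx`, `dx` on `[0, π / 2]`, where `Δ = √(1 + sin² x)`.
Replacing `Δ` by `√(1 + k² sin² x)` deforms `α₃` into a function of `k` that vanishes at `k = 0`.

With the primitives `y = arsinh (k sin x)` of `k cos x / Δ` and `v = arctan (k cos x / Δ)` of
`-k sin x / Δ`, the iterated integrals become single integrals of powers of `y` and `v`, except for
one combination of weight four that integration by parts reduces to a single mixed term. Their
derivatives in `k` again have this form with lower weight, so that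
`dα₃/dk = 6 log² (1 + k²) / k + (16 / π) (∫ y²) / k`, where `d(∫ y²)/dk = π log (1 + k²) / (2 k)`.
Integrating the last term by parts twice against `log k` leaves
`α₃ = ∫₀¹ (6 log² (1 + k²) / k + 8 k log² k / (1 + k²)) dk`,
and the two parts are `(3 / 4) ζ(3)` and `(3 / 2) ζ(3)`.
-/

namespace Lawson

open Real Set Filter Topology MeasureTheory intervalIntegral

section Calculus

variable {E : Type*} [NormedAddCommGroup E] [NormedSpace ℝ E]

theorem hasDerivAt_intervalIntegral_of_continuous {F F' : ℝ → ℝ → E}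
    (hF : ∀ k x, HasDerivAt (F · x) (F' k x) k) (hFc : ∀ k, Continuous (F k))
    (hF' : Continuous fun p : ℝ × ℝ => F' p.1 p.2) (a b k : ℝ) :
    HasDerivAt (fun k => ∫ x in a..b, F k x) (∫ x in a..b, F' k x) k := by
  obtain ⟨C, hC⟩ := ((isCompact_Icc (a := k - 1) (b := k + 1)).prod
    (isCompact_uIcc (a := a) (b := b))).exists_bound_of_continuousOn hF'.continuousOn
  have hF'k : Continuous (F' k) := hF'.comp (Continuous.prodMk_right k)
  exact (hasDerivAt_integral_of_dominated_loc_of_deriv_le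
    (bound := fun _ => C) (s := Icc (k - 1) (k + 1)) (Icc_mem_nhds (by linarith) (by linarith))
    (Eventually.of_forall fun k => (hFc k).aestronglyMeasurable)
    ((hFc k).intervalIntegrable _ _) hF'k.aestronglyMeasurable
    (Eventually.of_forall fun x hx k hk => hC (k, x) ⟨hk, uIoc_subset_uIcc hx⟩) (by simp)
    (Eventually.of_forall fun x _ k _ => hF k x)).2

theorem intervalIntegral_eq_of_hasDerivAt_sub [CompleteSpace E] {f g h : ℝ → E} {a b : ℝ}
    (hg : Continuous g) (hh : Continuous h) (hf : ∀ x, HasDerivAt f (g x - h x) x)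
    (hab : f a = f b) : ∫ x in a..b, g x = ∫ x in a..b, h x := by
  rw [← sub_eq_zero, ← integral_sub (hg.intervalIntegrable _ _) (hh.intervalIntegrable _ _),
    integral_eq_sub_of_hasDerivAt (fun x _ => hf x) ((hg.sub hh).intervalIntegrable _ _),
    hab, sub_self]

theorem eq_of_hasDerivAt_eq {f g f' : ℝ → E} {a : ℝ} (hf : ∀ x, HasDerivAt f (f' x) x)
    (hg : ∀ x, HasDerivAt g (f' x) x) (ha : f a = g a) : f = g :=
  eq_of_fderiv_eq (fun x => (hf x).differentiableAt) (fun x => (hg x).differentiableAt)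
    (fun x => by rw [(hf x).hasFDerivAt.fderiv, (hg x).hasFDerivAt.fderiv]) a ha

theorem hasDerivAt_sqrt_one_add_sq {f : ℝ → ℝ} {f' x : ℝ} (hf : HasDerivAt f f' x) :
    HasDerivAt (fun x => √(1 + f x ^ 2)) (f x * f' / √(1 + f x ^ 2)) x := by
  refine (((hf.fun_pow 2).const_add 1).sqrt (by positivity)).congr_deriv ?_
  field_simp
  push_cast
  ring

theorem tendsto_mul_log_pow_nhdsGT_zero {f : ℝ → ℝ} {f' : ℝ} (hf : HasDerivAt f f' 0)
    (h0 : f 0 = 0) (n : ℕ) : Tendsto (fun x => f x * log x ^ n) (𝓝[>] 0) (𝓝 0) := by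
  have hfO : f =O[𝓝[>] 0] fun x => x := by
    simpa [h0] using hf.isBigO_sub.mono nhdsWithin_le_nhds
  have hlog : (fun x => log x ^ n) =o[𝓝[>] 0] fun x : ℝ => x⁻¹ := by
    have h := (isLittleO_pow_log_id_atTop (n := n)).comp_tendsto tendsto_inv_nhdsGT_zero
    exact (h.norm_left.congr_left fun x => by simp).of_norm_left
  refine (Asymptotics.isLittleO_one_iff ℝ).1 ((hfO.mul_isLittleO hlog).congr' .rfl ?_)
  filter_upwards [self_mem_nhdsWithin] with x hx
  exact mul_inv_cancel₀ (ne_of_gt hx)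

end Calculus

section HasIntegralOn

/-- `HasIntegralOn f s I` says that `f` is Lebesgue integrable on `s` with integral `I`. Carrying
the integrability along, as `HasSum` does for series, makes the value meaningful and lets
improper integrals be added and substituted. -/
def HasIntegralOn (f : ℝ → ℝ) (s : Set ℝ) (I : ℝ) : Prop :=
  IntegrableOn f s ∧ ∫ x in s, f x = I

namespace HasIntegralOn

variable {f g : ℝ → ℝ} {s t : Set ℝ} {I J : ℝ}

theorem of_integral_ne_zero (h : ∫ x in s, f x = I) (hI : I ≠ 0) : HasIntegralOn f s I :=
  ⟨Integrable.of_integral_ne_zero (h ▸ hI), h⟩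

theorem congr (hf : HasIntegralOn f s I) (hs : MeasurableSet s) (hfg : EqOn f g s) :
    HasIntegralOn g s I :=
  ⟨hf.1.congr_fun hfg hs, (setIntegral_congr_fun hs hfg).symm.trans hf.2⟩

theorem add (hf : HasIntegralOn f s I) (hg : HasIntegralOn g s J) :
    HasIntegralOn (fun x => f x + g x) s (I + J) :=
  ⟨Integrable.add hf.1 hg.1, by rw [integral_add hf.1 hg.1, hf.2, hg.2]⟩

theorem sub (hf : HasIntegralOn f s I) (hg : HasIntegralOn g s J) :
    HasIntegralOn (fun x => f x - g x) s (I - J) :=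
  ⟨Integrable.sub hf.1 hg.1, by rw [integral_sub hf.1 hg.1, hf.2, hg.2]⟩

theorem const_mul (c : ℝ) (hf : HasIntegralOn f s I) :
    HasIntegralOn (fun x => c * f x) s (c * I) :=
  ⟨Integrable.const_mul hf.1 c, by rw [MeasureTheory.integral_const_mul, hf.2]⟩

theorem comp_of_bijOn {φ φ' : ℝ → ℝ} (hf : HasIntegralOn f t I) (hs : MeasurableSet s)
    (hφ : BijOn φ s t) (hφ' : ∀ x ∈ s, HasDerivAt φ (φ' x) x) :
    HasIntegralOn (fun x => |φ' x| * f (φ x)) s I := by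
  have hderiv : ∀ x ∈ s, HasDerivWithinAt φ (φ' x) s x := fun x hx => (hφ' x hx).hasDerivWithinAt
  rw [HasIntegralOn, ← hφ.image_eq,
    integrableOn_image_iff_integrableOn_abs_deriv_smul hs hderiv hφ.injOn,
    integral_image_eq_integral_abs_deriv_smul hs hderiv hφ.injOn] at hf
  exact hf

theorem comp_sq (hf : HasIntegralOn f (Ioo 0 1) I) :
    HasIntegralOn (fun x => 2 * x * f (x ^ 2)) (Ioo 0 1) I := by
  have hbij : BijOn (fun x : ℝ => x ^ 2) (Ioo 0 1) (Ioo 0 1) := by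
    refine InvOn.bijOn (f' := sqrt) ⟨fun x hx => sqrt_sq hx.1.le, fun x hx => sq_sqrt hx.1.le⟩
      (fun x hx => ⟨pow_pos hx.1 2, pow_lt_one₀ hx.1.le hx.2 two_ne_zero⟩)
      fun x hx => ⟨sqrt_pos.2 hx.1, ?_⟩
    simpa using sqrt_lt_sqrt hx.1.le hx.2
  refine (hf.comp_of_bijOn (φ' := fun x => 2 * x) measurableSet_Ioo hbij
    fun x _ => by simpa using hasDerivAt_pow 2 x).congr measurableSet_Ioo fun x hx => ?_
  simp only [abs_of_pos (mul_pos two_pos hx.1)]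

theorem comp_one_sub (hf : HasIntegralOn f (Ioo 0 1) I) :
    HasIntegralOn (fun x => f (1 - x)) (Ioo 0 1) I := by
  have hmaps : MapsTo (fun x : ℝ => 1 - x) (Ioo 0 1) (Ioo 0 1) :=
    fun x hx => ⟨sub_pos.2 hx.2, sub_lt_self 1 hx.1⟩
  have hinv : LeftInvOn (fun x : ℝ => 1 - x) (fun x => 1 - x) (Ioo 0 1) :=
    fun x _ => sub_sub_cancel 1 x
  simpa using hf.comp_of_bijOn (φ' := fun _ => -1) measurableSet_Ioo
    (InvOn.bijOn ⟨hinv, hinv⟩ hmaps hmaps) fun x _ => by simpa using (hasDerivAt_id x).const_sub 1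

theorem comp_one_sub_div_one_add (hf : HasIntegralOn f (Ioo 0 1) I) :
    HasIntegralOn (fun x => 2 / (1 + x) ^ 2 * f ((1 - x) / (1 + x))) (Ioo 0 1) I := by
  have hpos : ∀ x ∈ Ioo (0 : ℝ) 1, 0 < 1 + x := fun x hx => by linarith [hx.1]
  have hmaps : MapsTo (fun x : ℝ => (1 - x) / (1 + x)) (Ioo 0 1) (Ioo 0 1) := fun x hx =>
    ⟨div_pos (sub_pos.2 hx.2) (hpos x hx), (div_lt_one (hpos x hx)).2 (by linarith [hx.1])⟩
  have hinv : LeftInvOn (fun x : ℝ => (1 - x) / (1 + x)) (fun x => (1 - x) / (1 + x)) (Ioo 0 1) :=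
    fun x hx => by
      have := (hpos x hx).ne'
      field_simp
      ring
  have hderiv : ∀ x ∈ Ioo (0 : ℝ) 1,
      HasDerivAt (fun x => (1 - x) / (1 + x)) (-2 / (1 + x) ^ 2) x := fun x hx =>
    (((hasDerivAt_id x).const_sub 1).div ((hasDerivAt_id x).const_add 1)
      (hpos x hx).ne').congr_deriv (by simp only [id]; ring)
  refine (hf.comp_of_bijOn measurableSet_Ioo (InvOn.bijOn ⟨hinv, hinv⟩ hmaps hmaps) hderiv).congr
    measurableSet_Ioo fun x _ => ?_
  simp [abs_div]

theorem comp_exp_neg (hf : HasIntegralOn f (Ioi 0) I) :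
    HasIntegralOn (fun t => t⁻¹ * f (-log t)) (Ioo 0 1) I := by
  have hbij : BijOn (fun t => -log t) (Ioo 0 1) (Ioi 0) := by
    refine InvOn.bijOn (f' := fun x => exp (-x))
      ⟨fun t ht => ?_, fun x _ => ?_⟩ (fun t ht => neg_pos.2 (log_neg ht.1 ht.2))
      fun x hx => ⟨exp_pos _, exp_lt_one_iff.2 (neg_lt_zero.2 hx)⟩
    · simp only [neg_neg, exp_log ht.1]
    · simp only [log_exp, neg_neg]
  refine (hf.comp_of_bijOn measurableSet_Ioo hbij
    fun t ht => (hasDerivAt_log ht.1.ne').neg).congr measurableSet_Ioo fun t ht => ?_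
  simp only [abs_neg, abs_of_pos (inv_pos.2 ht.1)]

end HasIntegralOn

end HasIntegralOn

section LogIntegrals

/-- The real number `ζ(s)` for an integer `s ≥ 2`, as the Dirichlet series indexed from `0`. -/
def realZeta (s : ℕ) : ℝ := ∑' n : ℕ, 1 / ((n : ℝ) + 1) ^ s

theorem summable_one_div_succ_pow {s : ℕ} (hs : 1 < s) :
    Summable fun n : ℕ => 1 / ((n : ℝ) + 1) ^ s := by
  simpa using (summable_nat_add_iff 1).2 (summable_one_div_nat_pow.2 hs)

theorem realZeta_pos {s : ℕ} (hs : 1 < s) : 0 < realZeta s :=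
  (summable_one_div_succ_pow hs).tsum_pos (fun n => by positivity) 0 (by simp)

theorem riemannZeta_natCast_eq_realZeta {s : ℕ} (hs : 1 < s) : riemannZeta s = realZeta s := by
  have hshift : ∑' n : ℕ, 1 / (n : ℝ) ^ s = realZeta s := by
    rw [(summable_one_div_nat_pow.2 hs).tsum_eq_zero_add]
    simp [realZeta, Nat.ne_zero_of_lt hs]
  rw [zeta_nat_eq_tsum_of_gt_one hs, ← hshift]
  push_cast
  rfl

theorem hasIntegralOn_pow_mul_neg_log_pow (n m : ℕ) :
    HasIntegralOn (fun t => t ^ n * (-log t) ^ m) (Ioo 0 1) (m.factorial / (n + 1) ^ (m + 1)) := by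
  have hGamma : ∫ x in Ioi (0 : ℝ), x ^ m * exp (-((n + 1) * x)) =
      m.factorial / (n + 1) ^ (m + 1) := by
    have h := integral_rpow_mul_exp_neg_mul_Ioi (a := m + 1) (r := n + 1)
      (by positivity) (by positivity)
    simp only [add_sub_cancel_right, rpow_natCast, Gamma_nat_eq_factorial] at h
    rw [h, one_div, inv_rpow (by positivity), ← Nat.cast_succ m, rpow_natCast]
    field_simp
  refine (HasIntegralOn.of_integral_ne_zero hGamma (by positivity)).comp_exp_neg.congr
    measurableSet_Ioo fun t ht => ?_
  have hexp : exp (-((n + 1) * -log t)) = t ^ (n + 1) := by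
    rw [mul_neg, neg_neg, ← Nat.cast_succ, exp_nat_mul, exp_log ht.1]
  have ht0 := ht.1.ne'
  simp only [hexp]
  field_simp
  ring

theorem hasIntegralOn_neg_log_pow_div_one_sub {m : ℕ} (hm : 0 < m) :
    HasIntegralOn (fun t => (-log t) ^ m / (1 - t)) (Ioo 0 1)
      (m.factorial * realZeta (m + 1)) := by
  have hterm := fun n => hasIntegralOn_pow_mul_neg_log_pow n m
  have hnorm : ∀ n : ℕ, ∫ t in Ioo (0 : ℝ) 1, ‖t ^ n * (-log t) ^ m‖ =
      m.factorial * (1 / ((n : ℝ) + 1) ^ (m + 1)) := fun n => by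
    rw [mul_one_div, ← (hterm n).2]
    refine setIntegral_congr_fun measurableSet_Ioo fun t ht => norm_of_nonneg ?_
    exact mul_nonneg (pow_nonneg ht.1.le _) (pow_nonneg (neg_nonneg.2 (log_neg ht.1 ht.2).le) _)
  have hgeom : EqOn (fun t => ∑' n : ℕ, t ^ n * (-log t) ^ m) (fun t => (-log t) ^ m / (1 - t))
      (Ioo 0 1) := fun t ht => by
    simp only [tsum_mul_right, tsum_geometric_of_lt_one ht.1.le ht.2, div_eq_inv_mul]
  have hsum := hasSum_integral_of_summable_integral_norm (fun n => (hterm n).1) <|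
    ((summable_one_div_succ_pow (Nat.succ_lt_succ hm)).mul_left _).congr fun n => (hnorm n).symm
  have hzeta := realZeta_pos (Nat.succ_lt_succ hm)
  refine .of_integral_ne_zero ?_ (by positivity)
  rw [← setIntegral_congr_fun measurableSet_Ioo hgeom, ← hsum.tsum_eq, realZeta, ← tsum_mul_left]
  simp only [(hterm _).2, mul_one_div]

theorem hasIntegralOn_log_sq_div_one_sub :
    HasIntegralOn (fun t => log t ^ 2 / (1 - t)) (Ioo 0 1) (2 * realZeta 3) := by
  simpa using hasIntegralOn_neg_log_pow_div_one_sub two_pos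

theorem hasIntegralOn_log_one_sub_sq_div :
    HasIntegralOn (fun t => log (1 - t) ^ 2 / t) (Ioo 0 1) (2 * realZeta 3) := by
  simpa using hasIntegralOn_log_sq_div_one_sub.comp_one_sub

-- `1 / (1 + t) = 1 / (1 - t) - 2 t / (1 - t ^ 2)`, whose last term is a substitution `t ↦ t ^ 2`.
theorem hasIntegralOn_log_sq_div_one_add :
    HasIntegralOn (fun t => log t ^ 2 / (1 + t)) (Ioo 0 1) (3 / 2 * realZeta 3) := by
  have h := hasIntegralOn_log_sq_div_one_sub.sub
    (hasIntegralOn_log_sq_div_one_sub.comp_sq.const_mul (1 / 4))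
  rw [show 3 / 2 * realZeta 3 = 2 * realZeta 3 - 1 / 4 * (2 * realZeta 3) by ring]
  refine h.congr measurableSet_Ioo fun t ht => ?_
  have hsub : 1 - t ≠ 0 := by linarith [ht.2]
  have hadd : 1 + t ≠ 0 := by linarith [ht.1]
  simp only [log_pow, show 1 - t ^ 2 = (1 - t) * (1 + t) by ring]
  field_simp
  push_cast
  ring

theorem hasIntegralOn_log_one_sub_div_one_add_sq_div :
    HasIntegralOn (fun t => log ((1 - t) / (1 + t)) ^ 2 / t) (Ioo 0 1) (7 / 2 * realZeta 3) := by
  have h := (hasIntegralOn_log_sq_div_one_sub.add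
    hasIntegralOn_log_sq_div_one_add).comp_one_sub_div_one_add
  rw [show 7 / 2 * realZeta 3 = 2 * realZeta 3 + 3 / 2 * realZeta 3 by ring]
  refine h.congr measurableSet_Ioo fun t ht => ?_
  have ht0 : t ≠ 0 := ht.1.ne'
  have hadd : 1 + t ≠ 0 := by linarith [ht.1]
  have hsub' : 1 - (1 - t) / (1 + t) = 2 * t / (1 + t) := by field_simp; ring
  have hadd' : 1 + (1 - t) / (1 + t) = 2 / (1 + t) := by field_simp; ring
  simp only [hsub', hadd']
  generalize log ((1 - t) / (1 + t)) = l
  field_simp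

-- With `A = log (1 - t)` and `B = log (1 + t)`: `B² = (A + B)² / 2 + (A - B)² / 2 - A²`.
theorem hasIntegralOn_log_one_add_sq_div :
    HasIntegralOn (fun t => log (1 + t) ^ 2 / t) (Ioo 0 1) (1 / 4 * realZeta 3) := by
  have h := ((hasIntegralOn_log_one_sub_sq_div.comp_sq.const_mul (1 / 4)).add
    (hasIntegralOn_log_one_sub_div_one_add_sq_div.const_mul (1 / 2))).sub
    hasIntegralOn_log_one_sub_sq_div
  rw [show 1 / 4 * realZeta 3 =
    1 / 4 * (2 * realZeta 3) + 1 / 2 * (7 / 2 * realZeta 3) - 2 * realZeta 3 by ring]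
  refine h.congr measurableSet_Ioo fun t ht => ?_
  have ht0 : t ≠ 0 := ht.1.ne'
  have hsub : 1 - t ≠ 0 := by linarith [ht.2]
  have hadd : 1 + t ≠ 0 := by linarith [ht.1]
  simp only [show 1 - t ^ 2 = (1 - t) * (1 + t) by ring, log_mul hsub hadd, log_div hsub hadd]
  field_simp
  ring

theorem hasIntegralOn_six_mul_log_one_add_sq_div_add :
    HasIntegralOn (fun k => 6 * log (1 + k ^ 2) ^ 2 / k + 8 * k * log k ^ 2 / (1 + k ^ 2))
      (Ioo 0 1) (9 / 4 * realZeta 3) := by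
  have h := ((hasIntegralOn_log_one_add_sq_div.const_mul 3).add
    hasIntegralOn_log_sq_div_one_add).comp_sq
  rw [show 9 / 4 * realZeta 3 = 3 * (1 / 4 * realZeta 3) + 3 / 2 * realZeta 3 by ring]
  refine h.congr measurableSet_Ioo fun k hk => ?_
  have hk0 : k ≠ 0 := hk.1.ne'
  simp only [log_pow]
  push_cast
  field_simp
  ring

end LogIntegrals

section DeltaAmplitude

/-- The delta amplitude `√(1 + k² sin² x)`, i.e. Jacobi's `Δ` for the imaginary modulus `i k`. The
parameter `k` deforms the integrals of the theorem, which are those at `k = 1`, to zero. -/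
def jacobiDelta (k x : ℝ) : ℝ := √(1 + (k * sin x) ^ 2)

/-- The quotient `sin x / Δ` of the sine and the delta amplitude of modulus `k`. -/
def sinDelta (k x : ℝ) : ℝ := sin x / jacobiDelta k x

/-- The quotient `cos x / Δ` of the cosine and the delta amplitude of modulus `k`. -/
def cosDelta (k x : ℝ) : ℝ := cos x / jacobiDelta k x

/-- The primitive of `k cos x / Δ` in the variable `x` that vanishes at `x = 0`. -/
def arsinhSin (k x : ℝ) : ℝ := arsinh (k * sin x)

/-- The primitive of `-k sin x / Δ` in the variable `x` that vanishes at `x = π / 2`. -/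
def arctanCos (k x : ℝ) : ℝ := arctan (k * cosDelta k x)

theorem jacobiDelta_pos (k x : ℝ) : 0 < jacobiDelta k x := sqrt_pos.2 (by positivity)

section Continuity

variable {X : Type*} [TopologicalSpace X] {f g : X → ℝ}

@[fun_prop]
theorem continuous_jacobiDelta (hf : Continuous f) (hg : Continuous g) :
    Continuous fun a => jacobiDelta (f a) (g a) := by
  unfold jacobiDelta
  fun_prop

@[fun_prop]
theorem continuous_sinDelta (hf : Continuous f) (hg : Continuous g) :
    Continuous fun a => sinDelta (f a) (g a) :=
  (continuous_sin.comp hg).div (by fun_prop) fun _ => (jacobiDelta_pos _ _).ne'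

@[fun_prop]
theorem continuous_cosDelta (hf : Continuous f) (hg : Continuous g) :
    Continuous fun a => cosDelta (f a) (g a) :=
  (continuous_cos.comp hg).div (by fun_prop) fun _ => (jacobiDelta_pos _ _).ne'

@[fun_prop]
theorem continuous_arsinhSin (hf : Continuous f) (hg : Continuous g) :
    Continuous fun a => arsinhSin (f a) (g a) :=
  continuous_arsinh.comp (by fun_prop)

@[fun_prop]
theorem continuous_arctanCos (hf : Continuous f) (hg : Continuous g) :
    Continuous fun a => arctanCos (f a) (g a) :=
  continuous_arctan.comp (by fun_prop)

end Continuity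

variable (k x : ℝ)

@[simp] theorem sinDelta_zero_right : sinDelta k 0 = 0 := by simp [sinDelta]

@[simp] theorem cosDelta_pi_div_two : cosDelta k (π / 2) = 0 := by simp [cosDelta]

@[simp] theorem arsinhSin_zero_left : arsinhSin 0 x = 0 := by simp [arsinhSin]

@[simp] theorem arsinhSin_zero_right : arsinhSin k 0 = 0 := by simp [arsinhSin]

@[simp] theorem arctanCos_zero_left : arctanCos 0 x = 0 := by simp [arctanCos]

@[simp] theorem arctanCos_pi_div_two : arctanCos k (π / 2) = 0 := by simp [arctanCos]

theorem jacobiDelta_sq : jacobiDelta k x ^ 2 = 1 + (k * sin x) ^ 2 := sq_sqrt (by positivity)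

theorem cosDelta_sq_add_mul_sinDelta_sq :
    cosDelta k x ^ 2 + (1 + k ^ 2) * sinDelta k x ^ 2 = 1 := by
  have := (jacobiDelta_pos k x).ne'
  rw [cosDelta, sinDelta]
  field_simp
  linear_combination cos_sq_add_sin_sq x - jacobiDelta_sq k x

theorem hasDerivAt_jacobiDelta_left :
    HasDerivAt (jacobiDelta · x) (k * sin x * sinDelta k x) k :=
  (hasDerivAt_sqrt_one_add_sq ((hasDerivAt_id k).mul_const (sin x))).congr_deriv (by
    simp only [sinDelta, jacobiDelta, id]
    ring)

theorem hasDerivAt_jacobiDelta_right :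
    HasDerivAt (jacobiDelta k) (k ^ 2 * sin x * cosDelta k x) x :=
  (hasDerivAt_sqrt_one_add_sq ((hasDerivAt_sin x).const_mul k)).congr_deriv (by
    simp only [cosDelta, jacobiDelta]
    ring)

theorem hasDerivAt_mul_sinDelta_left :
    HasDerivAt (fun k => k * sinDelta k x) (sinDelta k x * (1 - (k * sinDelta k x) ^ 2)) k := by
  have hΔ := (jacobiDelta_pos k x).ne'
  refine ((hasDerivAt_id k).mul ((hasDerivAt_const k (sin x)).fun_div
    (hasDerivAt_jacobiDelta_left k x) hΔ)).congr_deriv ?_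
  simp only [sinDelta, id]
  field_simp
  ring

theorem hasDerivAt_mul_cosDelta_left :
    HasDerivAt (fun k => k * cosDelta k x) (cosDelta k x * (1 - (k * sinDelta k x) ^ 2)) k := by
  have hΔ := (jacobiDelta_pos k x).ne'
  refine ((hasDerivAt_id k).mul ((hasDerivAt_const k (cos x)).fun_div
    (hasDerivAt_jacobiDelta_left k x) hΔ)).congr_deriv ?_
  simp only [sinDelta, cosDelta, id]
  field_simp
  ring

theorem hasDerivAt_sinDelta_right :
    HasDerivAt (sinDelta k) (cosDelta k x * (1 - (k * sinDelta k x) ^ 2)) x := by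
  have hΔ := (jacobiDelta_pos k x).ne'
  refine ((hasDerivAt_sin x).div (hasDerivAt_jacobiDelta_right k x) hΔ).congr_deriv ?_
  simp only [sinDelta, cosDelta]
  field_simp

theorem hasDerivAt_cosDelta_right :
    HasDerivAt (cosDelta k) (-((1 + k ^ 2) * sinDelta k x * (1 - (k * sinDelta k x) ^ 2))) x := by
  have hΔ := (jacobiDelta_pos k x).ne'
  refine ((hasDerivAt_cos x).div (hasDerivAt_jacobiDelta_right k x) hΔ).congr_deriv ?_
  simp only [sinDelta, cosDelta]
  field_simp
  linear_combination
    k ^ 2 * sin x * jacobiDelta_sq k x - k ^ 2 * sin x * cos_sq_add_sin_sq x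

theorem hasDerivAt_arsinhSin_left : HasDerivAt (arsinhSin · x) (sinDelta k x) k := by
  refine ((hasDerivAt_id k).mul_const (sin x)).arsinh.congr_deriv ?_
  simp only [sinDelta, jacobiDelta, id, smul_eq_mul]
  field_simp

theorem hasDerivAt_arsinhSin_right : HasDerivAt (arsinhSin k) (k * cosDelta k x) x := by
  refine ((hasDerivAt_sin x).const_mul k).arsinh.congr_deriv ?_
  simp only [cosDelta, jacobiDelta, smul_eq_mul]
  field_simp

theorem one_add_mul_cosDelta_sq :
    1 + (k * cosDelta k x) ^ 2 = (1 + k ^ 2) * (1 - (k * sinDelta k x) ^ 2) := by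
  linear_combination k ^ 2 * cosDelta_sq_add_mul_sinDelta_sq k x

theorem hasDerivAt_arctanCos_left :
    HasDerivAt (arctanCos · x) (cosDelta k x / (1 + k ^ 2)) k := by
  have hpos : 1 + (k * cosDelta k x) ^ 2 ≠ 0 := by positivity
  have hk : 1 + k ^ 2 ≠ 0 := by positivity
  refine (hasDerivAt_mul_cosDelta_left k x).arctan.congr_deriv ?_
  rw [div_mul_eq_mul_div, div_eq_div_iff hpos hk, one_add_mul_cosDelta_sq]
  ring

theorem hasDerivAt_arctanCos_right :
    HasDerivAt (arctanCos k) (-(k * sinDelta k x)) x := by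
  have hpos : 1 + (k * cosDelta k x) ^ 2 ≠ 0 := by positivity
  refine ((hasDerivAt_cosDelta_right k x).const_mul k).arctan.congr_deriv ?_
  rw [div_mul_eq_mul_div, div_eq_iff hpos, one_add_mul_cosDelta_sq]
  ring

end DeltaAmplitude

section Moments

/-- The moment `∫ vⁿ k cos x / Δ` over `[0, π / 2]` of the function `v = arctanCos k`. -/
def arctanMoment (n : ℕ) (k : ℝ) : ℝ :=
  ∫ x in 0..π / 2, arctanCos k x ^ n * (k * cosDelta k x)

/-- The moment `∫ yⁿ k sin x / Δ` over `[0, π / 2]` of the function `y = arsinhSin k`. -/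
def arsinhMoment (n : ℕ) (k : ℝ) : ℝ :=
  ∫ x in 0..π / 2, arsinhSin k x ^ n * (k * sinDelta k x)

/-- The integral `∫ v²` over `[0, π / 2]` of the function `v = arctanCos k`. -/
def arctanSq (k : ℝ) : ℝ := ∫ x in 0..π / 2, arctanCos k x ^ 2

/-- The integral `∫ y²` over `[0, π / 2]` of the function `y = arsinhSin k`. -/
def arsinhSq (k : ℝ) : ℝ := ∫ x in 0..π / 2, arsinhSin k x ^ 2

/-- The primitive of `arctanCos k` that vanishes at `0`. -/
def arctanCosPrimitive (k x : ℝ) : ℝ := ∫ t in 0..x, arctanCos k t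

/-- The integral over `[0, π / 2]` of `arsinhSin k` times the primitive of `arctanCos k`. It carries
the part of the weight four integrals that does not reduce to moments. -/
def mixedIntegral (k : ℝ) : ℝ := ∫ x in 0..π / 2, arsinhSin k x * arctanCosPrimitive k x

@[fun_prop]
theorem continuous_arctanCosPrimitive {X : Type*} [TopologicalSpace X] [FirstCountableTopology X]
    {f g : X → ℝ} (hf : Continuous f) (hg : Continuous g) :
    Continuous fun a => arctanCosPrimitive (f a) (g a) :=
  continuous_parametric_intervalIntegral_of_continuous
    (f := fun a t => arctanCos (f a) t) (by fun_prop) hg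

@[simp] theorem arctanMoment_zero_right (n : ℕ) : arctanMoment n 0 = 0 := by simp [arctanMoment]

@[simp] theorem arsinhMoment_zero_right (n : ℕ) : arsinhMoment n 0 = 0 := by simp [arsinhMoment]

@[simp] theorem arctanSq_zero : arctanSq 0 = 0 := by simp [arctanSq]

@[simp] theorem arsinhSq_zero : arsinhSq 0 = 0 := by simp [arsinhSq]

@[simp] theorem arctanCosPrimitive_zero_left (x : ℝ) : arctanCosPrimitive 0 x = 0 := by
  simp [arctanCosPrimitive]

@[simp] theorem arctanCosPrimitive_zero_right (k : ℝ) : arctanCosPrimitive k 0 = 0 := by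
  simp [arctanCosPrimitive]

@[simp] theorem mixedIntegral_zero : mixedIntegral 0 = 0 := by simp [mixedIntegral]

variable (n : ℕ) (k x : ℝ)

theorem hasDerivAt_arctanCosPrimitive_right :
    HasDerivAt (arctanCosPrimitive k) (arctanCos k x) x :=
  (Continuous.integral_hasStrictDerivAt (by fun_prop) 0 x).hasDerivAt

theorem hasDerivAt_arctanCosPrimitive_left :
    HasDerivAt (arctanCosPrimitive · x) (∫ t in 0..x, cosDelta k t / (1 + k ^ 2)) k :=
  hasDerivAt_intervalIntegral_of_continuous hasDerivAt_arctanCos_left (by fun_prop)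
    (Continuous.div (by fun_prop) (by fun_prop) fun p => by positivity) 0 x k

theorem mul_integral_cosDelta : k * ∫ t in 0..x, cosDelta k t = arsinhSin k x := by
  rw [← intervalIntegral.integral_const_mul, integral_eq_sub_of_hasDerivAt
    (fun x _ => hasDerivAt_arsinhSin_right k x) (Continuous.intervalIntegrable (by fun_prop) _ _)]
  simp

theorem hasDerivAt_arctanMoment_succ :
    HasDerivAt (arctanMoment (n + 1))
      ((n + 1) * (k / (1 + k ^ 2)) * ∫ x in 0..π / 2, arctanCos k x ^ n) k := by
  have hderiv := hasDerivAt_intervalIntegral_of_continuous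
    (fun k x => ((hasDerivAt_arctanCos_left k x).fun_pow (n + 1)).mul
      (hasDerivAt_mul_cosDelta_left k x)) (by fun_prop) (by fun_prop (disch := intro; positivity))
    0 (π / 2) k
  refine hderiv.congr_deriv ?_
  rw [← intervalIntegral.integral_const_mul]
  refine intervalIntegral_eq_of_hasDerivAt_sub
    (f := fun x => arctanCos k x ^ (n + 1) * sinDelta k x)
    (by fun_prop) (by fun_prop) (fun x => ?_) (by simp)
  refine (((hasDerivAt_arctanCos_right k x).fun_pow (n + 1)).mul
    (hasDerivAt_sinDelta_right k x)).congr_deriv ?_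
  simp only [add_tsub_cancel_right, Nat.cast_add, Nat.cast_one]
  field_simp
  linear_combination
    -(n + 1) * arctanCos k x ^ n * k * cosDelta_sq_add_mul_sinDelta_sq k x

theorem hasDerivAt_arsinhMoment_succ :
    HasDerivAt (arsinhMoment (n + 1))
      ((n + 1) * (k / (1 + k ^ 2)) * ∫ x in 0..π / 2, arsinhSin k x ^ n) k := by
  have hderiv := hasDerivAt_intervalIntegral_of_continuous
    (fun k x => ((hasDerivAt_arsinhSin_left k x).fun_pow (n + 1)).mul
      (hasDerivAt_mul_sinDelta_left k x)) (by fun_prop) (by fun_prop) 0 (π / 2) k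
  refine hderiv.congr_deriv ?_
  rw [← intervalIntegral.integral_const_mul]
  refine intervalIntegral_eq_of_hasDerivAt_sub
    (f := fun x => -(arsinhSin k x ^ (n + 1) * cosDelta k x) / (1 + k ^ 2))
    (by fun_prop) (by fun_prop) (fun x => ?_) (by simp)
  refine ((((hasDerivAt_arsinhSin_right k x).fun_pow (n + 1)).mul
    (hasDerivAt_cosDelta_right k x)).neg.div_const _).congr_deriv ?_
  simp only [add_tsub_cancel_right, Nat.cast_add, Nat.cast_one]
  field_simp
  linear_combination
    -(n + 1) * arsinhSin k x ^ n * k * cosDelta_sq_add_mul_sinDelta_sq k x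

theorem hasDerivAt_log_one_add_sq : HasDerivAt (fun k => log (1 + k ^ 2)) (2 * k / (1 + k ^ 2)) k :=
  (((hasDerivAt_pow 2 k).const_add 1).log (by positivity)).congr_deriv (by simp)

theorem arctanMoment_one : arctanMoment 1 k = π / 4 * log (1 + k ^ 2) := by
  refine congr_fun (eq_of_hasDerivAt_eq (a := 0) (hasDerivAt_arctanMoment_succ 0)
    (fun k => ((hasDerivAt_log_one_add_sq k).const_mul _).congr_deriv ?_) (by simp)) k
  simp only [pow_zero, intervalIntegral.integral_const, sub_zero, smul_eq_mul, mul_one,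
    Nat.cast_zero, zero_add, one_mul]
  ring

theorem arsinhMoment_one : arsinhMoment 1 k = π / 4 * log (1 + k ^ 2) := by
  rw [← arctanMoment_one]
  refine intervalIntegral_eq_of_hasDerivAt_sub (f := fun x => -(arctanCos k x * arsinhSin k x))
    (by fun_prop) (by fun_prop) (fun x => ?_) (by simp)
  refine ((hasDerivAt_arctanCos_right k x).mul
    (hasDerivAt_arsinhSin_right k x)).neg.congr_deriv ?_
  ring

theorem integral_mul_sinDelta_mul_arctanCosPrimitive :
    ∫ x in 0..π / 2, k * sinDelta k x * arctanCosPrimitive k x = arctanSq k := by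
  refine intervalIntegral_eq_of_hasDerivAt_sub
    (f := fun x => -(arctanCos k x * arctanCosPrimitive k x))
    (by fun_prop) (by fun_prop) (fun x => ?_) (by simp)
  refine ((hasDerivAt_arctanCos_right k x).mul
    (hasDerivAt_arctanCosPrimitive_right k x)).neg.congr_deriv ?_
  ring

-- At `k = 0` the quotients below are the junk value `0`, which is the derivative there.
theorem hasDerivAt_arsinhSq :
    HasDerivAt arsinhSq (π / 2 * log (1 + k ^ 2) / k) k := by
  refine (hasDerivAt_intervalIntegral_of_continuous
    (fun k x => (hasDerivAt_arsinhSin_left k x).fun_pow 2) (by fun_prop) (by fun_prop)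
    0 (π / 2) k).congr_deriv ?_
  rcases eq_or_ne k 0 with rfl | hk
  · simp
  rw [eq_div_iff hk, ← intervalIntegral.integral_mul_const,
    show π / 2 * log (1 + k ^ 2) = 2 * arsinhMoment 1 k by rw [arsinhMoment_one]; ring,
    arsinhMoment, ← intervalIntegral.integral_const_mul]
  congr 1 with x
  push_cast
  ring

theorem hasDerivAt_arctanSq :
    HasDerivAt arctanSq (π / 2 * log (1 + k ^ 2) / (k * (1 + k ^ 2))) k := by
  refine (hasDerivAt_intervalIntegral_of_continuous
    (fun k x => (hasDerivAt_arctanCos_left k x).fun_pow 2) (by fun_prop)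
    (by fun_prop (disch := intro; positivity)) 0 (π / 2) k).congr_deriv ?_
  rcases eq_or_ne k 0 with rfl | hk
  · simp
  rw [eq_div_iff (by positivity), ← intervalIntegral.integral_mul_const,
    show π / 2 * log (1 + k ^ 2) = 2 * arctanMoment 1 k by rw [arctanMoment_one]; ring,
    arctanMoment, ← intervalIntegral.integral_const_mul]
  congr 1 with x
  push_cast
  field_simp

theorem hasDerivAt_mixedIntegral :
    HasDerivAt mixedIntegral (arctanSq k / k + arsinhSq k / (k * (1 + k ^ 2))) k := by
  have hprim : Continuous fun p : ℝ × ℝ => ∫ t in 0..p.2, cosDelta p.1 t / (1 + p.1 ^ 2) :=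
    continuous_parametric_intervalIntegral_of_continuous
      (f := fun (p : ℝ × ℝ) t => cosDelta p.1 t / (1 + p.1 ^ 2))
      (by fun_prop (disch := intro; positivity)) continuous_snd
  refine (hasDerivAt_intervalIntegral_of_continuous
    (fun k x => (hasDerivAt_arsinhSin_left k x).mul (hasDerivAt_arctanCosPrimitive_left k x))
    (by fun_prop) (by fun_prop) 0 (π / 2) k).congr_deriv ?_
  rcases eq_or_ne k 0 with rfl | hk
  · simp
  have hk' : 1 + k ^ 2 ≠ 0 := by positivity
  rw [← integral_mul_sinDelta_mul_arctanCosPrimitive, arsinhSq,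
    ← intervalIntegral.integral_div, ← intervalIntegral.integral_div, ← integral_add
      (Continuous.intervalIntegrable (by fun_prop) _ _)
      (Continuous.intervalIntegrable (by fun_prop) _ _)]
  congr 1 with x
  rw [intervalIntegral.integral_div, ← mul_integral_cosDelta k x]
  field_simp

theorem arctanSq_eq : arctanSq k = arsinhSq k - π / 8 * log (1 + k ^ 2) ^ 2 := by
  refine congr_fun (eq_of_hasDerivAt_eq (a := 0) hasDerivAt_arctanSq
    (fun k => ((hasDerivAt_arsinhSq k).sub
      (((hasDerivAt_log_one_add_sq k).fun_pow 2).const_mul _)).congr_deriv ?_) (by simp)) k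
  rcases eq_or_ne k 0 with rfl | hk
  · simp
  push_cast
  field_simp
  ring

end Moments

section AreaCoeff

/-- The coefficient `α₃` along the deformation: its value at `k = 1` is the combination of iterated
integrals in the theorem. -/
def areaCoeff (k : ℝ) : ℝ :=
  log (1 + k ^ 2) ^ 3 + log (1 + k ^ 2) * (2 * arsinhSq k + 12 * arctanSq k) / π -
    (8 * arctanMoment 3 k - 4 / 3 * arsinhMoment 3 k - 8 * mixedIntegral k) / π

theorem hasDerivAt_areaCoeff (k : ℝ) :
    HasDerivAt areaCoeff (6 * log (1 + k ^ 2) ^ 2 / k + 16 * arsinhSq k / (π * k)) k := by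
  have hlog := hasDerivAt_log_one_add_sq k
  have h := ((hlog.fun_pow 3).add ((hlog.mul (((hasDerivAt_arsinhSq k).const_mul 2).add
    ((hasDerivAt_arctanSq k).const_mul 12))).div_const π)).sub
    (((((hasDerivAt_arctanMoment_succ 2 k).const_mul 8).sub
      ((hasDerivAt_arsinhMoment_succ 2 k).const_mul (4 / 3))).sub
      ((hasDerivAt_mixedIntegral k).const_mul 8)).div_const π)
  refine h.congr_deriv ?_
  rcases eq_or_ne k 0 with rfl | hk
  · simp
  rw [← arctanSq, ← arsinhSq]
  simp only [Pi.add_apply, arctanSq_eq]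
  push_cast
  field_simp
  ring

theorem areaCoeff_zero : areaCoeff 0 = 0 := by simp [areaCoeff]

/-- The coefficient `areaCoeff` with logarithmic correction terms which vanish at both ends of
`[0, 1]` and remove `arsinhSq` from the derivative. -/
def correctedAreaCoeff (k : ℝ) : ℝ :=
  areaCoeff k - 16 / π * (arsinhSq k * log k) + 4 * (log (1 + k ^ 2) * log k ^ 2)

theorem hasDerivAt_correctedAreaCoeff {k : ℝ} (hk : k ≠ 0) :
    HasDerivAt correctedAreaCoeff
      (6 * log (1 + k ^ 2) ^ 2 / k + 8 * k * log k ^ 2 / (1 + k ^ 2)) k := by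
  have hlog := hasDerivAt_log hk
  refine (((hasDerivAt_areaCoeff k).sub (((hasDerivAt_arsinhSq k).mul hlog).const_mul _)).add
    (((hasDerivAt_log_one_add_sq k).mul (hlog.fun_pow 2)).const_mul _)).congr_deriv ?_
  push_cast
  field_simp
  ring

theorem tendsto_correctedAreaCoeff_zero : Tendsto correctedAreaCoeff (𝓝[>] 0) (𝓝 0) := by
  have harea : Tendsto areaCoeff (𝓝[>] 0) (𝓝 0) := by
    simpa only [areaCoeff_zero] using
      (hasDerivAt_areaCoeff 0).continuousAt.tendsto.mono_left nhdsWithin_le_nhds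
  have hsq := tendsto_mul_log_pow_nhdsGT_zero (hasDerivAt_arsinhSq 0) arsinhSq_zero 1
  have hlog := tendsto_mul_log_pow_nhdsGT_zero (hasDerivAt_log_one_add_sq 0) (by simp) 2
  unfold correctedAreaCoeff
  simpa using (harea.sub (hsq.const_mul (16 / π))).add (hlog.const_mul 4)

theorem areaCoeff_one : areaCoeff 1 = 9 / 4 * realZeta 3 := by
  have hint := hasIntegralOn_six_mul_log_one_add_sq_div_add
  have hone : Tendsto correctedAreaCoeff (𝓝[<] 1) (𝓝 (areaCoeff 1)) := by
    simpa [correctedAreaCoeff] using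
      (hasDerivAt_correctedAreaCoeff one_ne_zero).continuousAt.tendsto.mono_left nhdsWithin_le_nhds
  have hFTC := integral_eq_sub_of_hasDerivAt_of_tendsto zero_lt_one
    (fun k hk => hasDerivAt_correctedAreaCoeff hk.1.ne')
    ((intervalIntegrable_iff_integrableOn_Ioo_of_le zero_le_one).2 hint.1)
    tendsto_correctedAreaCoeff_zero hone
  rw [integral_of_le zero_le_one, integral_Ioc_eq_integral_Ioo, hint.2, sub_zero] at hFTC
  exact hFTC.symm

end AreaCoeff

section IteratedIntegral

/-- The iterated integral of real functions along `[0, x]`, with the innermost integrand first: the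
real counterpart of `Omega`. -/
def iteratedIntegral (fs : List (ℝ → ℝ)) : ℝ → ℝ :=
  fs.foldl (fun g f x => ∫ t in 0..x, g t * f t) fun _ => 1

@[simp] theorem iteratedIntegral_nil : iteratedIntegral [] = fun _ => 1 := rfl

theorem iteratedIntegral_concat (fs : List (ℝ → ℝ)) (f : ℝ → ℝ) :
    iteratedIntegral (fs ++ [f]) = fun x => ∫ t in 0..x, iteratedIntegral fs t * f t := by
  simp [iteratedIntegral, List.foldl_append]

theorem Omega_concat (fs : List (ℂ → ℂ)) (f : ℂ → ℂ) :
    Omega (fs ++ [f]) = fun z => ∫ t in 0..z, Omega fs t * f t := by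
  simp [Omega, List.foldl_append]

variable {fs : List (ℝ → ℝ)} {f : ℝ → ℝ}

theorem continuous_iteratedIntegral (hfs : ∀ f ∈ fs, Continuous f) :
    Continuous (iteratedIntegral fs) := by
  induction fs using List.reverseRecOn with
  | nil => exact continuous_const
  | append_singleton fs f ih =>
    rw [List.forall_mem_append] at hfs
    have hf : Continuous f := hfs.2 f (List.mem_singleton_self f)
    rw [iteratedIntegral_concat]
    exact continuous_primitive (fun _ _ => ((ih hfs.1).mul hf).intervalIntegrable _ _) 0

theorem hasDerivAt_iteratedIntegral_concat (hfs : ∀ f ∈ fs, Continuous f) (hf : Continuous f)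
    (x : ℝ) : HasDerivAt (iteratedIntegral (fs ++ [f])) (iteratedIntegral fs x * f x) x := by
  rw [iteratedIntegral_concat]
  exact (((continuous_iteratedIntegral hfs).mul hf).integral_hasStrictDerivAt 0 x).hasDerivAt

theorem iteratedIntegral_concat_eq {g : ℝ → ℝ} (hfs : ∀ f ∈ fs, Continuous f) (hf : Continuous f)
    (hg : ∀ x, HasDerivAt g (iteratedIntegral fs x * f x) x) (hg0 : g 0 = 0) :
    iteratedIntegral (fs ++ [f]) = g :=
  eq_of_hasDerivAt_eq (a := 0) (hasDerivAt_iteratedIntegral_concat hfs hf) hg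
    (by simp [iteratedIntegral_concat, hg0])

theorem iteratedIntegral_replicate {y b : ℝ → ℝ} (hb : Continuous b)
    (hy : ∀ x, HasDerivAt y (b x) x) (hy0 : y 0 = 0) (n : ℕ) :
    iteratedIntegral (List.replicate n b) = fun x => y x ^ n / n.factorial := by
  induction n with
  | zero => simp
  | succ n ih =>
    rw [List.replicate_succ']
    refine iteratedIntegral_concat_eq (by simp +contextual [hb]) hb (fun x => ?_) (by simp [hy0])
    refine (((hy x).fun_pow (n + 1)).div_const _).congr_deriv ?_
    rw [ih, Nat.factorial_succ]
    push_cast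
    field_simp

theorem iteratedIntegral_append_cons_replicate {v a : ℝ → ℝ} {e : ℝ}
    (hfs : ∀ f ∈ fs, Continuous f) (hf : Continuous f) (ha : Continuous a)
    (hv : ∀ x, HasDerivAt v (-a x) x) (hve : v e = 0) (n : ℕ) :
    iteratedIntegral (fs ++ f :: List.replicate n a) e =
      ∫ t in 0..e, iteratedIntegral fs t * f t * (v t ^ n / n.factorial) := by
  induction n generalizing fs f with
  | zero => simp [iteratedIntegral_concat]
  | succ n ih =>
    have hfs' : ∀ g ∈ fs ++ [f], Continuous g := by
      simpa [or_imp, forall_and] using ⟨hfs, hf⟩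
    have hvc : Continuous v := continuous_iff_continuousAt.2 fun x => (hv x).continuousAt
    have hIc := continuous_iteratedIntegral hfs
    have hIc' := continuous_iteratedIntegral hfs'
    rw [List.replicate_succ, List.append_cons, ih hfs' ha]
    refine intervalIntegral_eq_of_hasDerivAt_sub
      (f := fun t => -(iteratedIntegral (fs ++ [f]) t * (v t ^ (n + 1) / (n + 1).factorial)))
      (by fun_prop) (by fun_prop) (fun x => ?_) (by simp [iteratedIntegral_concat, hve])
    refine ((hasDerivAt_iteratedIntegral_concat hfs hf x).mul
      (((hv x).fun_pow (n + 1)).div_const _)).neg.congr_deriv ?_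
    rw [Nat.factorial_succ]
    push_cast
    field_simp
    ring

theorem Omega_map_eq_mul_iteratedIntegral {ι : Type*} {F : ι → ℂ → ℂ} {d : ι → ℂ}
    {h : ι → ℝ → ℝ} {X X' : ℝ → ℝ} (hh : ∀ i, Continuous (h i)) (hX' : Continuous X')
    (hX : ∀ t, HasDerivAt X (X' t) t) (hX0 : X 0 = 0)
    (hF : ∀ i (t : ℝ), F i t = d i * ↑(h i (X t) * X' t)) (w : List ι) (z : ℝ) :
    Omega (w.map F) z = (w.map d).prod * iteratedIntegral (w.map h) (X z) := by
  induction w using List.reverseRecOn generalizing z with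
  | nil => simp [Omega]
  | append_singleton w i ih =>
    have hIc : Continuous (iteratedIntegral (w.map h)) :=
      continuous_iteratedIntegral (by simpa using fun i _ => hh i)
    have hsubst : ∫ t in 0..z, iteratedIntegral (w.map h) (X t) * h i (X t) * X' t =
        ∫ u in 0..X z, iteratedIntegral (w.map h) u * h i u := by
      simpa [hX0] using integral_comp_mul_deriv (a := 0) (b := z) (fun t _ => hX t)
        hX'.continuousOn (hIc.mul (hh i))
    simp only [List.map_append, List.map_cons, List.map_nil, List.prod_append, List.prod_singleton,
      Omega_concat, iteratedIntegral_concat, ← hsubst, ← intervalIntegral.integral_ofReal,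
      ← intervalIntegral.integral_const_mul, ih, hF]
    congr 1 with t
    push_cast
    ring

end IteratedIntegral

section DeltaIntegral

/-- The forms `k sin x / Δ`, `k cos x / Δ` and `1`. For `k = 1` they are, up to constants, the
pullbacks of `F₁`, `F₂` and `F₃`; note the shift of the indices by one. -/
def deltaForm (k : ℝ) : Fin 3 → ℝ → ℝ :=
  ![fun x => k * sinDelta k x, fun x => k * cosDelta k x, fun _ => 1]

/-- The iterated integral along `[0, π / 2]` of the forms `deltaForm k i` with `i` in the word
`w`. -/
def deltaIntegral (k : ℝ) (w : List (Fin 3)) : ℝ := iteratedIntegral (w.map (deltaForm k)) (π / 2)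

variable (k : ℝ)

theorem deltaForm_zero : deltaForm k 0 = fun x => k * sinDelta k x := rfl

theorem deltaForm_one : deltaForm k 1 = fun x => k * cosDelta k x := rfl

theorem deltaForm_two : deltaForm k 2 = fun _ => 1 := rfl

theorem continuous_deltaForm (i : Fin 3) : Continuous (deltaForm k i) := by
  fin_cases i <;> dsimp [deltaForm] <;> fun_prop

theorem deltaIntegral_replicate_one_append_cons_replicate_zero (m n : ℕ) (i : Fin 3) :
    deltaIntegral k (List.replicate m 1 ++ i :: List.replicate n 0) =
      ∫ x in 0..π / 2, arsinhSin k x ^ m / m.factorial * deltaForm k i x *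
        (arctanCos k x ^ n / n.factorial) := by
  rw [deltaIntegral, List.map_append, List.map_cons, List.map_replicate, List.map_replicate,
    iteratedIntegral_append_cons_replicate (by simp +contextual [continuous_deltaForm])
      (continuous_deltaForm k i) (continuous_deltaForm k 0) (hasDerivAt_arctanCos_right k)
      (arctanCos_pi_div_two k) n,
    iteratedIntegral_replicate (continuous_deltaForm k 1) (hasDerivAt_arsinhSin_right k)
      (arsinhSin_zero_right k) m]

theorem deltaIntegral_const : deltaIntegral k [2] = π / 2 := by
  simpa [deltaForm_two] using deltaIntegral_replicate_one_append_cons_replicate_zero k 0 0 2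

theorem deltaIntegral_cos_sin : deltaIntegral k [1, 0] = arctanMoment 1 k := by
  simpa [arctanMoment, deltaForm_one, mul_comm] using
    deltaIntegral_replicate_one_append_cons_replicate_zero k 0 1 1

theorem deltaIntegral_cos_cos_const : deltaIntegral k [1, 1, 2] = arsinhSq k / 2 := by
  simpa [arsinhSq, deltaForm_two] using
    deltaIntegral_replicate_one_append_cons_replicate_zero k 2 0 2

theorem deltaIntegral_const_sin_sin : deltaIntegral k [2, 0, 0] = arctanSq k / 2 := by
  simpa [arctanSq, deltaForm_two] using
    deltaIntegral_replicate_one_append_cons_replicate_zero k 0 2 2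

theorem deltaIntegral_cos_sin_sin_sin : deltaIntegral k [1, 0, 0, 0] = arctanMoment 3 k / 6 := by
  have h := deltaIntegral_replicate_one_append_cons_replicate_zero k 0 3 1
  rw [arctanMoment, ← intervalIntegral.integral_div]
  refine h.trans (integral_congr fun x _ => ?_)
  simp only [deltaForm_one, Nat.factorial]
  push_cast
  ring

theorem deltaIntegral_cos_cos_cos_sin : deltaIntegral k [1, 1, 1, 0] = arsinhMoment 3 k / 6 := by
  have h := deltaIntegral_replicate_one_append_cons_replicate_zero k 3 0 0
  rw [arsinhMoment, ← intervalIntegral.integral_div]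
  refine h.trans (integral_congr fun x _ => ?_)
  simp only [deltaForm_zero, Nat.factorial]
  push_cast
  ring

theorem iteratedIntegral_replicate_const (n : ℕ) :
    iteratedIntegral (List.replicate n (deltaForm k 2)) = fun x => x ^ n / (n.factorial : ℝ) :=
  iteratedIntegral_replicate (continuous_deltaForm k 2) hasDerivAt_id rfl n

theorem hasDerivAt_pi_div_two_sub (x : ℝ) : HasDerivAt (fun x => π / 2 - x) (-deltaForm k 2 x) x :=
  (hasDerivAt_id x).const_sub _

theorem iteratedIntegral_const_sin :
    iteratedIntegral [deltaForm k 2, deltaForm k 0] =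
      fun x => arctanCosPrimitive k x - x * arctanCos k x := by
  refine iteratedIntegral_concat_eq (fs := [deltaForm k 2]) (by simp [continuous_deltaForm])
    (continuous_deltaForm k 0) (fun x => ?_) (by simp)
  refine ((hasDerivAt_arctanCosPrimitive_right k x).sub
    ((hasDerivAt_id x).mul (hasDerivAt_arctanCos_right k x))).congr_deriv ?_
  rw [show [deltaForm k 2] = List.replicate 1 (deltaForm k 2) from rfl,
    iteratedIntegral_replicate_const]
  simp [deltaForm_zero]

theorem deltaIntegral_cos_sin_const_const :
    deltaIntegral k [1, 0, 2, 2] =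
      ∫ x in 0..π / 2, arsinhSin k x * (k * sinDelta k x) * ((π / 2 - x) ^ 2 / 2) := by
  refine (iteratedIntegral_append_cons_replicate (fs := List.replicate 1 (deltaForm k 1))
    (by simp [continuous_deltaForm]) (continuous_deltaForm k 0)
    (continuous_deltaForm k 2) (hasDerivAt_pi_div_two_sub k) (sub_self _) 2).trans ?_
  rw [iteratedIntegral_replicate (continuous_deltaForm k 1) (hasDerivAt_arsinhSin_right k)
    (arsinhSin_zero_right k)]
  simp [deltaForm_zero]

theorem deltaIntegral_const_sin_cos_const :
    deltaIntegral k [2, 0, 1, 2] = ∫ x in 0..π / 2,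
      (arctanCosPrimitive k x - x * arctanCos k x) * (k * cosDelta k x) * (π / 2 - x) := by
  refine (iteratedIntegral_append_cons_replicate (fs := [deltaForm k 2, deltaForm k 0])
    (by simp [continuous_deltaForm]) (continuous_deltaForm k 1)
    (continuous_deltaForm k 2) (hasDerivAt_pi_div_two_sub k) (sub_self _) 1).trans ?_
  simp [iteratedIntegral_const_sin, deltaForm_one]

theorem deltaIntegral_const_const_cos_sin :
    deltaIntegral k [2, 2, 1, 0] =
      ∫ x in 0..π / 2, x ^ 2 / 2 * (k * cosDelta k x) * arctanCos k x := by
  refine (iteratedIntegral_append_cons_replicate (fs := List.replicate 2 (deltaForm k 2))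
    (by simp [continuous_deltaForm]) (continuous_deltaForm k 1)
    (continuous_deltaForm k 0) (hasDerivAt_arctanCos_right k) (arctanCos_pi_div_two k) 1).trans ?_
  rw [iteratedIntegral_replicate_const]
  simp [deltaForm_one]

theorem deltaIntegral_cos_sin_const_const_sub_add :
    deltaIntegral k [1, 0, 2, 2] - deltaIntegral k [2, 0, 1, 2] + deltaIntegral k [2, 2, 1, 0] =
      π ^ 2 / 8 * arctanMoment 1 k - mixedIntegral k := by
  have hint : ∀ {g : ℝ → ℝ}, Continuous g → IntervalIntegrable g volume 0 (π / 2) :=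
    fun hg => hg.intervalIntegrable _ _
  rw [deltaIntegral_cos_sin_const_const, deltaIntegral_const_sin_cos_const,
    deltaIntegral_const_const_cos_sin, arctanMoment, mixedIntegral,
    ← intervalIntegral.integral_const_mul,
    ← integral_sub (hint (by fun_prop)) (hint (by fun_prop)),
    ← integral_add (hint (by fun_prop)) (hint (by fun_prop)),
    ← integral_sub (hint (by fun_prop)) (hint (by fun_prop))]
  refine intervalIntegral_eq_of_hasDerivAt_sub
    (f := fun x => -((π / 2 - x) ^ 2 / 2 * (arsinhSin k x * arctanCos k x)) -
      (π / 2 - x) * (arctanCosPrimitive k x * arsinhSin k x))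
    (by fun_prop) (by fun_prop) (fun x => ?_) (by simp)
  have hu := hasDerivAt_pi_div_two_sub k x
  have hy := hasDerivAt_arsinhSin_right k x
  refine ((((hu.fun_pow 2).div_const 2).mul (hy.fun_mul (hasDerivAt_arctanCos_right k x))).neg.sub
    (hu.mul ((hasDerivAt_arctanCosPrimitive_right k x).fun_mul hy))).congr_deriv ?_
  simp only [deltaForm_two]
  push_cast
  ring

end DeltaIntegral

section Amplitude

/-- The substitution `x = amplitude z`, for which `tan x = √2 z / (1 - z²)`. It maps `[0, 1]` to
`[0, π / 2]` and turns the rational forms `F₁`, `F₂`, `F₃` into multiples of `deltaForm 1`. -/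
def amplitude (z : ℝ) : ℝ := arctan (√2 * z + 1) + arctan (√2 * z - 1)

theorem amplitude_zero : amplitude 0 = 0 := by simp [amplitude]

variable (z : ℝ)

theorem one_add_sq_mul_one_add_sq :
    (1 + (√2 * z + 1) ^ 2) * (1 + (√2 * z - 1) ^ 2) = 2 ^ 2 * (1 + z ^ 4) := by
  linear_combination (z ^ 4 * (√2 ^ 2 + 2)) * sq_sqrt (zero_le_two (α := ℝ))

theorem sqrt_one_add_sq_mul_sqrt_one_add_sq :
    √(1 + (√2 * z + 1) ^ 2) * √(1 + (√2 * z - 1) ^ 2) = 2 * √(1 + z ^ 4) := by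
  rw [← sqrt_mul (by positivity), one_add_sq_mul_one_add_sq, sqrt_mul (by positivity),
    sqrt_sq zero_le_two]

theorem hasDerivAt_amplitude : HasDerivAt amplitude (√2 * (1 + z ^ 2) / (1 + z ^ 4)) z := by
  have hlin := (hasDerivAt_id z).const_mul √2
  refine ((hlin.add_const 1).arctan.add (hlin.sub_const 1).arctan).congr_deriv ?_
  have hprod := one_add_sq_mul_one_add_sq z
  have hadd : 1 + (√2 * z + 1) ^ 2 ≠ 0 := by positivity
  have hsub : 1 + (√2 * z - 1) ^ 2 ≠ 0 := by positivity
  simp only [id, mul_one]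
  rw [div_mul_eq_mul_div, div_mul_eq_mul_div, div_add_div _ _ hadd hsub, hprod]
  field_simp
  linear_combination (2 * z ^ 2) * sq_sqrt (zero_le_two (α := ℝ))

theorem sin_amplitude : sin (amplitude z) = √2 * z / √(1 + z ^ 4) := by
  rw [amplitude, sin_add, sin_arctan, cos_arctan, sin_arctan, cos_arctan, div_mul_div_comm,
    div_mul_div_comm, sqrt_one_add_sq_mul_sqrt_one_add_sq]
  ring

theorem cos_amplitude : cos (amplitude z) = (1 - z ^ 2) / √(1 + z ^ 4) := by
  have hab : 1 * 1 - (√2 * z + 1) * (√2 * z - 1) = 2 * (1 - z ^ 2) := by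
    linear_combination -z ^ 2 * sq_sqrt (zero_le_two (α := ℝ))
  rw [amplitude, cos_add, sin_arctan, cos_arctan, sin_arctan, cos_arctan, div_mul_div_comm,
    div_mul_div_comm, sqrt_one_add_sq_mul_sqrt_one_add_sq, ← sub_div, hab,
    mul_div_mul_left _ _ two_ne_zero]

theorem amplitude_one : amplitude 1 = π / 2 := by
  have hprod : (√2 + 1) * (√2 - 1) = 1 := by
    linear_combination sq_sqrt (zero_le_two (α := ℝ))
  rw [amplitude, mul_one, eq_inv_of_mul_eq_one_right hprod, arctan_inv_of_pos (by positivity)]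
  ring

theorem jacobiDelta_one_amplitude :
    jacobiDelta 1 (amplitude z) = (1 + z ^ 2) / √(1 + z ^ 4) := by
  rw [jacobiDelta, sin_amplitude, ← sqrt_sq (show 0 ≤ 1 + z ^ 2 by positivity),
    ← sqrt_div (by positivity)]
  congr 1
  rw [one_mul, div_pow, mul_pow, sq_sqrt zero_le_two, sq_sqrt (by positivity)]
  field_simp
  ring

theorem sinDelta_one_amplitude : sinDelta 1 (amplitude z) = √2 * z / (1 + z ^ 2) := by
  rw [sinDelta, sin_amplitude, jacobiDelta_one_amplitude,
    div_div_div_cancel_right₀ (by positivity)]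

theorem cosDelta_one_amplitude : cosDelta 1 (amplitude z) = (1 - z ^ 2) / (1 + z ^ 2) := by
  rw [cosDelta, cos_amplitude, jacobiDelta_one_amplitude,
    div_div_div_cancel_right₀ (by positivity)]

end Amplitude

section PartialFractions

open Complex (I I_sq)

theorem one_div_sub_add_one_div_add {K : Type*} [Field K] {z p : K} (h : z ^ 2 - p ^ 2 ≠ 0) :
    1 / (z - p) + 1 / (z + p) = 2 * z / (z ^ 2 - p ^ 2) := by
  rw [sq_sub_sq] at h ⊢
  rw [one_div_add_one_div (right_ne_zero_of_mul h) (left_ne_zero_of_mul h)]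
  ring

theorem one_div_sub_sub_one_div_add {K : Type*} [Field K] {z p : K} (h : z ^ 2 - p ^ 2 ≠ 0) :
    1 / (z - p) - 1 / (z + p) = 2 * p / (z ^ 2 - p ^ 2) := by
  rw [sq_sub_sq] at h ⊢
  rw [div_sub_div _ _ (right_ne_zero_of_mul h) (left_ne_zero_of_mul h)]
  ring

theorem complex_cos_pi_div_four : Complex.cos (π / 4) = √2 / 2 :=
  mod_cast congr_arg Complex.ofReal cos_pi_div_four

theorem complex_sin_pi_div_four : Complex.sin (π / 4) = √2 / 2 :=
  mod_cast congr_arg Complex.ofReal sin_pi_div_four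

theorem p₁_eq : p₁ = √2 / 2 * (1 + I) := by
  rw [p₁, mul_comm, Complex.exp_mul_I, complex_cos_pi_div_four, complex_sin_pi_div_four]
  ring

theorem p₂_eq : p₂ = √2 / 2 * (-1 + I) := by
  rw [p₂, ← mul_neg, mul_comm, Complex.exp_mul_I, Complex.cos_neg, Complex.sin_neg,
    complex_cos_pi_div_four, complex_sin_pi_div_four]
  ring

theorem ofReal_sqrt_two_sq : (√2 : ℂ) ^ 2 = 2 := by
  exact mod_cast sq_sqrt zero_le_two

theorem p₁_sq : p₁ ^ 2 = I := by
  rw [p₁_eq]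
  linear_combination (1 + I) ^ 2 / 4 * ofReal_sqrt_two_sq + 1 / 2 * I_sq

theorem p₂_sq : p₂ ^ 2 = -I := by
  rw [p₂_eq]
  linear_combination (-1 + I) ^ 2 / 4 * ofReal_sqrt_two_sq + 1 / 2 * I_sq

variable {z : ℂ}

theorem sq_sub_p₁_sq_mul_sq_sub_p₂_sq : (z ^ 2 - p₁ ^ 2) * (z ^ 2 - p₂ ^ 2) = 1 + z ^ 4 := by
  rw [p₁_sq, p₂_sq]
  linear_combination -I_sq

theorem sq_sub_p₁_sq_ne_zero (hz : 1 + z ^ 4 ≠ 0) : z ^ 2 - p₁ ^ 2 ≠ 0 :=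
  left_ne_zero_of_mul (sq_sub_p₁_sq_mul_sq_sub_p₂_sq.trans_ne hz)

theorem sq_sub_p₂_sq_ne_zero (hz : 1 + z ^ 4 ≠ 0) : z ^ 2 - p₂ ^ 2 ≠ 0 :=
  right_ne_zero_of_mul (sq_sub_p₁_sq_mul_sq_sub_p₂_sq.trans_ne hz)

theorem F₁_eq (hz : 1 + z ^ 4 ≠ 0) : F₁ z = 4 * I * z / (1 + z ^ 4) := by
  have h₁ := sq_sub_p₁_sq_ne_zero hz
  have h₂ := sq_sub_p₂_sq_ne_zero hz
  calc F₁ z = 1 / (z - p₁) + 1 / (z + p₁) - (1 / (z - p₂) + 1 / (z + p₂)) := by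
        simp only [F₁, p₃, p₄]
        ring
    _ = 4 * I * z / (1 + z ^ 4) := by
        rw [one_div_sub_add_one_div_add h₁, one_div_sub_add_one_div_add h₂, div_sub_div _ _ h₁ h₂,
          sq_sub_p₁_sq_mul_sq_sub_p₂_sq, p₁_sq, p₂_sq]
        ring

theorem F₂_eq (hz : 1 + z ^ 4 ≠ 0) : F₂ z = -(2 * √2 * (1 - z ^ 2)) / (1 + z ^ 4) := by
  have h₁ := sq_sub_p₁_sq_ne_zero hz
  have h₂ := sq_sub_p₂_sq_ne_zero hz
  calc F₂ z = 1 / (z - p₁) - 1 / (z + p₁) - (1 / (z - p₂) - 1 / (z + p₂)) := by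
        simp only [F₂, p₃, p₄]
        ring
    _ = -(2 * √2 * (1 - z ^ 2)) / (1 + z ^ 4) := by
        rw [one_div_sub_sub_one_div_add h₁, one_div_sub_sub_one_div_add h₂, div_sub_div _ _ h₁ h₂,
          sq_sub_p₁_sq_mul_sq_sub_p₂_sq, p₁_sq, p₂_sq, p₁_eq, p₂_eq]
        linear_combination 2 * √2 / (1 + z ^ 4) * I_sq

theorem F₃_eq (hz : 1 + z ^ 4 ≠ 0) : F₃ z = 2 * I * √2 * (1 + z ^ 2) / (1 + z ^ 4) := by
  have h₁ := sq_sub_p₁_sq_ne_zero hz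
  have h₂ := sq_sub_p₂_sq_ne_zero hz
  calc F₃ z = 1 / (z - p₁) - 1 / (z + p₁) + (1 / (z - p₂) - 1 / (z + p₂)) := by
        simp only [F₃, p₃, p₄]
        ring
    _ = 2 * I * √2 * (1 + z ^ 2) / (1 + z ^ 4) := by
        rw [one_div_sub_sub_one_div_add h₁, one_div_sub_sub_one_div_add h₂, div_add_div _ _ h₁ h₂,
          sq_sub_p₁_sq_mul_sq_sub_p₂_sq, p₁_sq, p₂_sq, p₁_eq, p₂_eq]
        ring

end PartialFractions

section OmegaValues

open Complex (I)

theorem F_eq_mul_deltaForm_amplitude (i : Fin 3) (t : ℝ) :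
    ![F₁, F₂, F₃] i t = ![2 * I, -2, 2 * I] i *
      (deltaForm 1 i (amplitude t) * (√2 * (1 + t ^ 2) / (1 + t ^ 4)) : ℝ) := by
  have h₄ : 1 + (t : ℂ) ^ 4 ≠ 0 := mod_cast (by positivity : 1 + t ^ 4 ≠ 0)
  have h₂ : 1 + (t : ℂ) ^ 2 ≠ 0 := mod_cast (by positivity : 1 + t ^ 2 ≠ 0)
  match i with
  | 0 =>
    simp only [Matrix.cons_val, deltaForm_zero, sinDelta_one_amplitude, F₁_eq h₄]
    push_cast
    field_simp
    linear_combination -2 * t * ofReal_sqrt_two_sq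
  | 1 =>
    simp only [Matrix.cons_val, deltaForm_one, cosDelta_one_amplitude, F₂_eq h₄]
    push_cast
    field_simp
  | 2 =>
    simp only [Matrix.cons_val, deltaForm_two, F₃_eq h₄]
    push_cast
    ring

theorem Omega_map_F_one (w : List (Fin 3)) :
    Omega (w.map ![F₁, F₂, F₃]) 1 = (w.map ![2 * I, -2, 2 * I]).prod * deltaIntegral 1 w := by
  have hcont : Continuous fun t : ℝ => √2 * (1 + t ^ 2) / (1 + t ^ 4) :=
    Continuous.div (by fun_prop) (by fun_prop) fun t => by positivity
  rw [Omega_map_eq_mul_iteratedIntegral (continuous_deltaForm 1) hcont hasDerivAt_amplitude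
    amplitude_zero F_eq_mul_deltaForm_amplitude, amplitude_one, deltaIntegral]

theorem Omega_F₃ : Omega [F₃] 1 = π * I := by
  refine (Omega_map_F_one [2]).trans ?_
  simp only [List.map, List.prod_cons, List.prod_nil, Matrix.cons_val,
    deltaIntegral_const]
  push_cast
  ring

theorem Omega_F₂_F₁ : Omega [F₂, F₁] 1 = -(π * I * log 2) := by
  refine (Omega_map_F_one [1, 0]).trans ?_
  simp only [List.map, List.prod_cons, List.prod_nil, Matrix.cons_val,
    deltaIntegral_cos_sin, arctanMoment_one, one_pow, one_add_one_eq_two]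
  push_cast
  ring

theorem Omega_F₂_F₂_F₃ : Omega [F₂, F₂, F₃] 1 = 4 * I * arsinhSq 1 := by
  refine (Omega_map_F_one [1, 1, 2]).trans ?_
  simp only [List.map, List.prod_cons, List.prod_nil, Matrix.cons_val,
    deltaIntegral_cos_cos_const]
  push_cast
  ring

theorem Omega_F₃_F₁_F₁ : Omega [F₃, F₁, F₁] 1 = -(4 * I * arctanSq 1) := by
  refine (Omega_map_F_one [2, 0, 0]).trans ?_
  simp only [List.map, List.prod_cons, List.prod_nil, Matrix.cons_val,
    deltaIntegral_const_sin_sin]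
  push_cast
  linear_combination 4 * I * arctanSq 1 * Complex.I_sq

theorem Omega_F₂_F₁_F₁_F₁ : Omega [F₂, F₁, F₁, F₁] 1 = 8 / 3 * I * arctanMoment 3 1 := by
  refine (Omega_map_F_one [1, 0, 0, 0]).trans ?_
  simp only [List.map, List.prod_cons, List.prod_nil, Matrix.cons_val,
    deltaIntegral_cos_sin_sin_sin]
  push_cast
  linear_combination -8 / 3 * I * arctanMoment 3 1 * Complex.I_sq

theorem Omega_F₂_F₂_F₂_F₁ : Omega [F₂, F₂, F₂, F₁] 1 = -(8 / 3 * I * arsinhMoment 3 1) := by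
  refine (Omega_map_F_one [1, 1, 1, 0]).trans ?_
  simp only [List.map, List.prod_cons, List.prod_nil, Matrix.cons_val,
    deltaIntegral_cos_cos_cos_sin]
  push_cast
  ring

theorem Omega_F₂_F₁_F₃_F₃_sub_add :
    Omega [F₂, F₁, F₃, F₃] 1 - Omega [F₃, F₁, F₂, F₃] 1 + Omega [F₃, F₃, F₂, F₁] 1 =
      16 * I * (π ^ 3 / 32 * log 2 - mixedIntegral 1) := by
  have hmixed : (deltaIntegral 1 [1, 0, 2, 2] - deltaIntegral 1 [2, 0, 1, 2] +
      deltaIntegral 1 [2, 2, 1, 0] : ℂ) = π ^ 3 / 32 * log 2 - mixedIntegral 1 := by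
    have h := deltaIntegral_cos_sin_const_const_sub_add 1
    rw [arctanMoment_one, one_pow, one_add_one_eq_two] at h
    exact_mod_cast h.trans (by ring)
  have hprod : -2 * (2 * I) * (2 * I) * (2 * I) = 16 * I := by
    linear_combination -16 * I * Complex.I_sq
  have h₁ : Omega [F₂, F₁, F₃, F₃] 1 = 16 * I * deltaIntegral 1 [1, 0, 2, 2] := by
    refine (Omega_map_F_one [1, 0, 2, 2]).trans ?_
    simp only [List.map, List.prod_cons, List.prod_nil, Matrix.cons_val, ← hprod]
    ring
  have h₂ : Omega [F₃, F₁, F₂, F₃] 1 = 16 * I * deltaIntegral 1 [2, 0, 1, 2] := by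
    refine (Omega_map_F_one [2, 0, 1, 2]).trans ?_
    simp only [List.map, List.prod_cons, List.prod_nil, Matrix.cons_val, ← hprod]
    ring
  have h₃ : Omega [F₃, F₃, F₂, F₁] 1 = 16 * I * deltaIntegral 1 [2, 2, 1, 0] := by
    refine (Omega_map_F_one [2, 2, 1, 0]).trans ?_
    simp only [List.map, List.prod_cons, List.prod_nil, Matrix.cons_val, ← hprod]
    ring
  rw [h₁, h₂, h₃, ← hmixed]
  ring

end OmegaValues

end Lawson

open Lawson

/- STATEMENT 19: the third order coefficient of the area expansion of the Lawson
surfaces,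
`α₃ = -(i/π³) Ω_{2,1}³ - (1/(16π²)) Ω_{2,1} (-8 Ω_{2,2,3} + 48 Ω_{3,1,1} + 4 Ω₃³)
      + (i/(2π)) (6 Ω_{2,1,1,1} + Ω_{2,1,3,3} + Ω_{2,2,2,1} - Ω_{3,1,2,3} + Ω_{3,3,2,1})`,
equals `(9/4) ζ(3)`. -/
theorem stmt_19 :
    -(Complex.I / (Real.pi : ℂ) ^ 3) * (Omega [F₂, F₁] 1) ^ 3 -
        (1 / (16 * (Real.pi : ℂ) ^ 2)) * Omega [F₂, F₁] 1 *
          (-8 * Omega [F₂, F₂, F₃] 1 + 48 * Omega [F₃, F₁, F₁] 1 +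
            4 * (Omega [F₃] 1) ^ 3) +
        Complex.I / (2 * (Real.pi : ℂ)) *
          (6 * Omega [F₂, F₁, F₁, F₁] 1 + Omega [F₂, F₁, F₃, F₃] 1 +
            Omega [F₂, F₂, F₂, F₁] 1 - Omega [F₃, F₁, F₂, F₃] 1 +
            Omega [F₃, F₃, F₂, F₁] 1) =
      (9 / 4 : ℂ) * riemannZeta 3 := by
  have hzeta : riemannZeta 3 = realZeta 3 :=
    mod_cast riemannZeta_natCast_eq_realZeta (s := 3) (by norm_num)
  have harea : (areaCoeff 1 : ℂ) = 9 / 4 * realZeta 3 := by simp [areaCoeff_one]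
  have hsum : 6 * Omega [F₂, F₁, F₁, F₁] 1 + Omega [F₂, F₁, F₃, F₃] 1 +
      Omega [F₂, F₂, F₂, F₁] 1 - Omega [F₃, F₁, F₂, F₃] 1 + Omega [F₃, F₃, F₂, F₁] 1 =
      Complex.I * (16 * arctanMoment 3 1 - 8 / 3 * arsinhMoment 3 1 +
        16 * (Real.pi ^ 3 / 32 * Real.log 2 - mixedIntegral 1)) := by
    linear_combination 6 * Omega_F₂_F₁_F₁_F₁ + Omega_F₂_F₂_F₂_F₁ + Omega_F₂_F₁_F₃_F₃_sub_add
  have hπ : (Real.pi : ℂ) ≠ 0 := mod_cast Real.pi_ne_zero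
  rw [hsum, hzeta, ← harea, areaCoeff, one_pow, one_add_one_eq_two, Omega_F₃, Omega_F₂_F₁,
    Omega_F₂_F₂_F₃, Omega_F₃_F₁_F₁]
  push_cast
  field_simp
  ring_nf
  simp only [Complex.I_sq, Complex.I_pow_four]
  ring
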